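/- Let v and u be real-valued functions in L¹([−π,π]) ∩ L²([−π,π]) with Fourier coefficients {v_j} and {u_j}. Suppose |v(ω)| ≤ M₁ < ∞ for almost every ω and Σ_{j=−∞}^{∞} |j| |u_j|² ≤ M₂ < ∞. Then for every n ≥ 1, ‖T_n(vu) − T_n(v) T_n(u)‖_F² ≤ 4 M₁² M₂. -/

import Mathlib

open MeasureTheory

/-- The `j`-th Fourier coefficient `v_j = (1/(2π)) ∫_{−π}^{π} v(ω) e^{−iωj} dω` of an
integrable function `v` on `[−π, π]`. -/
noncomputable def fCoef (v : ℝ → ℝ) (j : ℤ) : ℂ :=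
  (((2 * Real.pi)⁻¹ : ℝ) : ℂ) *
    ∫ ω in Set.Icc (-Real.pi) Real.pi, (v ω : ℂ) * Complex.exp (-(Complex.I * ω * j))

/-- The `n×n` Toeplitz matrix `T_n(v)` with entries `[T_n(v)]_{jk} = v_{j−k}`. -/
noncomputable def Toep (n : ℕ) (v : ℝ → ℝ) : Matrix (Fin n) (Fin n) ℂ :=
  Matrix.of fun j k : Fin n => fCoef v ((j : ℤ) - (k : ℤ))

/-! The matrix `T_n(fg) - T_n(f) T_n(g)` is the compression of `M_f (1 - P) M_g` to trigonometric
polynomials with frequencies in `[0, n)`, where `P` is the orthogonal projection onto them and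
`M_f`, `M_g` are multiplication operators. Hence its squared Frobenius norm is at most
`‖f‖_∞² ∑_k ‖(1 - P)(g e_k)‖²`. By Parseval, `‖(1 - P)(g e_k)‖²` is the sum of `|g_l|²` over those
`l` for which `l + k` lies outside `[0, n)`, and each `l` is counted for at most `|l|`
indices `k`. -/

open AddCircle Finset
open scoped ENNReal

lemma sum_univ_fin_intCast {M : Type*} [AddCommMonoid M] (n : ℕ) (F : ℤ → M) :
    ∑ i : Fin n, F i = ∑ m ∈ Ico (0 : ℤ) n, F m := by
  rw [Fin.sum_univ_eq_sum_range (fun i => F i) n]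
  refine sum_nbij (fun i : ℕ => (i : ℤ)) (by simp) (by simp) (fun m hm => ?_) (by simp)
  rw [mem_coe, mem_Ico] at hm
  exact ⟨m.toNat, by simp; lia, by simp [hm.1]⟩

lemma card_filter_add_notMem_Ico_le (a b l : ℤ) :
    #{k ∈ Ico a b | l + k ∉ Ico a b} ≤ l.natAbs := by
  have hsub : {k ∈ Ico a b | l + k ∉ Ico a b} ⊆ Ico (b - l) b ∪ Ico a (a - l) := by
    intro k
    simp only [mem_filter, mem_union, mem_Ico]
    lia
  calc #{k ∈ Ico a b | l + k ∉ Ico a b}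
      ≤ #(Ico (b - l) b) + #(Ico a (a - l)) := (card_le_card hsub).trans (card_union_le _ _)
    _ = l.natAbs := by rw [Int.card_Ico, Int.card_Ico]; lia

lemma sum_tsum_notMem_Ico_le_tsum_abs_mul {w : ℤ → ℝ} (hw : ∀ l, 0 ≤ w l)
    (hs : Summable fun l : ℤ => |(l : ℝ)| * w l) (a b : ℤ) :
    ∑ k ∈ Ico a b, ∑' l, (if l ∈ Ico a b then 0 else w (l - k)) ≤ ∑' l : ℤ, |(l : ℝ)| * w l := by
  have hcount (l : ℤ) :
      ∑ k ∈ Ico a b, (if l + k ∈ Ico a b then 0 else w l) ≤ |(l : ℝ)| * w l := by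
    calc ∑ k ∈ Ico a b, (if l + k ∈ Ico a b then 0 else w l)
        = #{k ∈ Ico a b | l + k ∉ Ico a b} * w l := by
          rw [← nsmul_eq_mul, ← sum_const, sum_filter]
          simp only [ite_not]
      _ ≤ |(l : ℝ)| * w l := by
          rw [← Int.cast_abs, ← Int.natCast_natAbs, Int.cast_natCast]
          gcongr
          · exact hw l
          · exact card_filter_add_notMem_Ico_le a b l
  have hnonneg (k l : ℤ) : 0 ≤ if l + k ∈ Ico a b then 0 else w l := by
    split_ifs
    exacts [le_rfl, hw l]
  have hsummable : ∀ k ∈ Ico a b, Summable fun l => if l + k ∈ Ico a b then 0 else w l :=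
    fun k hk => hs.of_nonneg_of_le (hnonneg k) fun l =>
      (single_le_sum (fun k _ => hnonneg k l) hk).trans (hcount l)
  have hshift (k : ℤ) : ∑' l, (if l ∈ Ico a b then 0 else w (l - k)) =
      ∑' l, (if l + k ∈ Ico a b then 0 else w l) := by
    rw [← (Equiv.addRight k).tsum_eq]
    simp only [Equiv.coe_addRight, add_sub_cancel_right]
  simp_rw [hshift]
  rw [← Summable.tsum_finsetSum hsummable]
  exact (summable_sum hsummable).tsum_le_tsum hcount hs

section Circle

variable {T : ℝ} [Fact (0 < T)] {f g : AddCircle T → ℂ} {M : ℝ}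

lemma fourierCoeff_mul_fourier (f : AddCircle T → ℂ) (k j : ℤ) :
    fourierCoeff (f * ⇑(fourier k)) j = fourierCoeff f (j - k) := by
  refine integral_congr_ae (.of_forall fun t => ?_)
  simp only [Pi.mul_apply, smul_eq_mul]
  rw [neg_sub, sub_eq_add_neg, fourier_add]
  ring

lemma fourierCoeff_sub {E : Type*} [NormedAddCommGroup E] [NormedSpace ℂ E]
    {f g : AddCircle T → E} (hf : Integrable f haarAddCircle)
    (hg : Integrable g haarAddCircle) :
    fourierCoeff (f - g) = fourierCoeff f - fourierCoeff g := by
  ext j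
  simpa only [fourierCoeff, Pi.sub_apply, smul_sub] using
    integral_sub (hf.fourier_smul (-j)) (hg.fourier_smul (-j))

lemma memLp_fourier (k : ℤ) (p : ℝ≥0∞) : MemLp (fourier k) p (haarAddCircle (T := T)) :=
  (memLp_top_of_bound (fourier k).continuous.aestronglyMeasurable 1
    (.of_forall fun _ => (Circle.norm_coe _).le)).mono_exponent le_top

lemma hasSum_sq_norm_fourierCoeff (hf : MemLp f 2 haarAddCircle) :
    HasSum (fun j => ‖fourierCoeff f j‖ ^ 2) (∫ t, ‖f t‖ ^ 2 ∂haarAddCircle) := by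
  have hae := hf.coeFn_toLp
  have hint : ∫ t, ‖hf.toLp f t‖ ^ 2 ∂haarAddCircle = ∫ t, ‖f t‖ ^ 2 ∂haarAddCircle :=
    integral_congr_ae (hae.fun_comp (‖·‖ ^ 2))
  simpa only [hint, fourierCoeff_congr_ae hae] using hasSum_sq_fourierCoeff (hf.toLp f)

lemma sum_sq_norm_fourierCoeff_mul_le (hf : AEStronglyMeasurable f haarAddCircle)
    (hM : ∀ᵐ t ∂haarAddCircle, ‖f t‖ ≤ M) (hg : MemLp g 2 haarAddCircle) (S : Finset ℤ) :
    ∑ j ∈ S, ‖fourierCoeff (f * g) j‖ ^ 2 ≤ M ^ 2 * ∫ t, ‖g t‖ ^ 2 ∂haarAddCircle := by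
  have hfg : MemLp (f * g) 2 haarAddCircle := hg.mul (memLp_top_of_bound hf M hM)
  calc ∑ j ∈ S, ‖fourierCoeff (f * g) j‖ ^ 2
      ≤ ∫ t, ‖(f * g) t‖ ^ 2 ∂haarAddCircle :=
        sum_le_hasSum S (fun j _ => by positivity) (hasSum_sq_norm_fourierCoeff hfg)
    _ ≤ ∫ t, M ^ 2 * ‖g t‖ ^ 2 ∂haarAddCircle := by
        refine integral_mono_ae hfg.integrable_norm_pow' (hg.integrable_norm_pow'.const_mul _) ?_
        filter_upwards [hM] with t ht
        rw [Pi.mul_apply, norm_mul, mul_pow]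
        gcongr
    _ = M ^ 2 * ∫ t, ‖g t‖ ^ 2 ∂haarAddCircle := integral_const_mul _ _

/-- The remainder `g - ∑_{m ∈ S} g_m e_m` of the Fourier series of `g`; for `g` in `L²` it is the
component of `g` orthogonal to the Fourier monomials with frequencies in `S`. -/
noncomputable def fourierRemainder (S : Finset ℤ) (g : AddCircle T → ℂ) : AddCircle T → ℂ :=
  g - ∑ m ∈ S, fourierCoeff g m • ⇑(fourier m)

lemma memLp_fourierRemainder {p : ℝ≥0∞} (hg : MemLp g p haarAddCircle) (S : Finset ℤ) :
    MemLp (fourierRemainder S g) p haarAddCircle :=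
  hg.sub (memLp_finsetSum' S fun m _ => (memLp_fourier m p).const_smul _)

lemma fourierCoeff_mul_fourierRemainder (hf : Integrable f haarAddCircle)
    (hfg : Integrable (f * g) haarAddCircle) (S : Finset ℤ) (j : ℤ) :
    fourierCoeff (f * fourierRemainder S g) j =
      fourierCoeff (f * g) j - ∑ m ∈ S, fourierCoeff f (j - m) * fourierCoeff g m := by
  have hterm (m : ℤ) : Integrable (fourierCoeff g m • (f * ⇑(fourier m))) haarAddCircle :=
    (hf.mul_of_top_left (memLp_fourier m ∞)).smul _
  have hexpand : f * fourierRemainder S g =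
      f * g - ∑ m ∈ S, fourierCoeff g m • (f * ⇑(fourier m)) := by
    simp only [fourierRemainder, mul_sub, mul_sum, mul_smul_comm]
  rw [hexpand, fourierCoeff_sub hfg (integrable_finsetSum' S fun m _ => hterm m),
    fourierCoeff.sum S _ fun m _ => hterm m]
  simp only [Pi.sub_apply, Finset.sum_apply, fourierCoeff.const_smul, fourierCoeff_mul_fourier,
    smul_eq_mul, mul_comm]

lemma fourierCoeff_fourierRemainder (hg : Integrable g haarAddCircle) (S : Finset ℤ) (j : ℤ) :
    fourierCoeff (fourierRemainder S g) j = if j ∈ S then 0 else fourierCoeff g j := by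
  have hone : fourierCoeff (1 : AddCircle T → ℂ) = Pi.single 0 1 := by
    rw [← fourierCoeff_fourier (T := T)]
    congr 1
    ext t
    rw [fourier_zero, Pi.one_apply]
  have h := fourierCoeff_mul_fourierRemainder (f := (1 : AddCircle T → ℂ)) (integrable_const 1)
    (by rwa [one_mul]) S j
  rw [one_mul, one_mul, hone] at h
  rw [h]
  simp only [Pi.single_apply, sub_eq_zero, ite_mul, one_mul, zero_mul, sum_ite_eq]
  split_ifs
  exacts [sub_self _, sub_zero _]

lemma sum_sq_norm_fourierCoeff_mul_sub_le (hf : AEStronglyMeasurable f haarAddCircle)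
    (hM : ∀ᵐ t ∂haarAddCircle, ‖f t‖ ≤ M) (hg : MemLp g 2 haarAddCircle) (S : Finset ℤ) :
    ∑ j ∈ S, ‖fourierCoeff (f * g) j - ∑ m ∈ S, fourierCoeff f (j - m) * fourierCoeff g m‖ ^ 2 ≤
      M ^ 2 * ∑' l, if l ∈ S then 0 else ‖fourierCoeff g l‖ ^ 2 := by
  have hftop : MemLp f ∞ haarAddCircle := memLp_top_of_bound hf M hM
  have hfg : MemLp (f * g) 2 haarAddCircle := hg.mul hftop
  have hrem : MemLp (fourierRemainder S g) 2 haarAddCircle := memLp_fourierRemainder hg S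
  have hParseval : ∫ t, ‖fourierRemainder S g t‖ ^ 2 ∂haarAddCircle =
      ∑' l, if l ∈ S then 0 else ‖fourierCoeff g l‖ ^ 2 := by
    rw [← (hasSum_sq_norm_fourierCoeff hrem).tsum_eq]
    refine tsum_congr fun l => ?_
    rw [fourierCoeff_fourierRemainder (hg.integrable one_le_two)]
    split_ifs <;> simp
  simp_rw [← fourierCoeff_mul_fourierRemainder (hftop.integrable le_top)
    (hfg.integrable one_le_two), ← hParseval]
  exact sum_sq_norm_fourierCoeff_mul_le hf hM hrem S

/-- The `n × n` Toeplitz matrix with entries `a (j - k)`, so that `Toep n v` is the case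
`a = fCoef v`. -/
def toeplitzMatrix {R : Type*} (n : ℕ) (a : ℤ → R) : Matrix (Fin n) (Fin n) R :=
  Matrix.of fun j k => a ((j : ℤ) - (k : ℤ))

lemma toeplitzMatrix_fourierCoeff_mul_sub_apply (n : ℕ) (f g : AddCircle T → ℂ) (j k : Fin n) :
    (toeplitzMatrix n (fourierCoeff (f * g)) -
        toeplitzMatrix n (fourierCoeff f) * toeplitzMatrix n (fourierCoeff g)) j k =
      fourierCoeff (f * (g * ⇑(fourier k))) j -
        ∑ m ∈ Ico (0 : ℤ) n, fourierCoeff f (j - m) * fourierCoeff (g * ⇑(fourier k)) m := by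
  simp only [← mul_assoc, fourierCoeff_mul_fourier, ← sum_univ_fin_intCast]
  rfl

theorem stmt17_general (n : ℕ) (hf : AEStronglyMeasurable f haarAddCircle)
    (hM : ∀ᵐ t ∂haarAddCircle, ‖f t‖ ≤ M) (hg : MemLp g 2 haarAddCircle)
    (hs : Summable fun l : ℤ => |(l : ℝ)| * ‖fourierCoeff g l‖ ^ 2) :
    (∑ j : Fin n, ∑ k : Fin n, ‖(toeplitzMatrix n (fourierCoeff (f * g)) -
        toeplitzMatrix n (fourierCoeff f) * toeplitzMatrix n (fourierCoeff g)) j k‖ ^ 2) ≤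
      M ^ 2 * ∑' l : ℤ, |(l : ℝ)| * ‖fourierCoeff g l‖ ^ 2 := by
  let S : Finset ℤ := Ico 0 n
  let defect (k j : ℤ) : ℂ := fourierCoeff (f * (g * ⇑(fourier k))) j -
    ∑ m ∈ S, fourierCoeff f (j - m) * fourierCoeff (g * ⇑(fourier k)) m
  have hcolumn (k : ℤ) : ∑ j ∈ S, ‖defect k j‖ ^ 2 ≤
      M ^ 2 * ∑' l, if l ∈ S then 0 else ‖fourierCoeff g (l - k)‖ ^ 2 := by
    simpa only [defect, fourierCoeff_mul_fourier] using
      sum_sq_norm_fourierCoeff_mul_sub_le hf hM ((memLp_fourier k ∞).mul hg) S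
  calc _ = ∑ j : Fin n, ∑ k : Fin n, ‖defect k j‖ ^ 2 := by
        simp only [toeplitzMatrix_fourierCoeff_mul_sub_apply, defect, S]
    _ = ∑ k ∈ S, ∑ j ∈ S, ‖defect k j‖ ^ 2 := by
        rw [sum_comm, sum_univ_fin_intCast n fun k => ∑ j : Fin n, ‖defect k j‖ ^ 2]
        exact sum_congr rfl fun k _ => sum_univ_fin_intCast n fun j => ‖defect k j‖ ^ 2
    _ ≤ M ^ 2 * ∑ k ∈ S, ∑' l, (if l ∈ S then 0 else ‖fourierCoeff g (l - k)‖ ^ 2) := by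
        rw [mul_sum]
        exact sum_le_sum fun k _ => hcolumn k
    _ ≤ M ^ 2 * ∑' l : ℤ, |(l : ℝ)| * ‖fourierCoeff g l‖ ^ 2 := by
        gcongr
        exact sum_tsum_notMem_Ico_le_tsum_abs_mul (fun l => by positivity) hs 0 n

end Circle

lemma ae_haarAddCircle_liftIoc {T a : ℝ} [Fact (0 < T)] {E : Type*} {f : ℝ → E} {p : E → Prop}
    (h : ∀ᵐ x ∂volume.restrict (Set.Ioc a (a + T)), p (f x)) :
    ∀ᵐ t ∂haarAddCircle, p (liftIoc T a f t) := by
  have hequiv : MeasurePreserving (fun t => (equivIoc T a t : ℝ)) volume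
      (volume.restrict (Set.Ioc a (a + T))) :=
    (measurePreserving_subtype_coe measurableSet_Ioc).comp (measurePreserving_equivIoc T)
  have hvolume : ∀ᵐ t : AddCircle T, p (liftIoc T a f t) := by
    simpa only [liftIoc, Set.domRestrict_def, Function.comp_def] using
      hequiv.quasiMeasurePreserving.ae h
  rw [volume_eq_smul_haarAddCircle, Measure.ae_ennreal_smul_measure_eq] at hvolume
  · exact hvolume
  · simpa using Fact.out

instance fact_zero_lt_two_pi : Fact (0 < 2 * Real.pi) := ⟨Real.two_pi_pos⟩

/-- The complex-valued function on the circle `ℝ / 2πℤ` that agrees with `v` on `(-π, π]`. -/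
noncomputable def circleLift (v : ℝ → ℝ) : AddCircle (2 * Real.pi) → ℂ :=
  liftIoc (2 * Real.pi) (-Real.pi) fun ω => (v ω : ℂ)

lemma restrict_Ioc_neg_pi_add_two_pi :
    volume.restrict (Set.Ioc (-Real.pi) (-Real.pi + 2 * Real.pi)) =
      volume.restrict (Set.Icc (-Real.pi) Real.pi) := by
  rw [show -Real.pi + 2 * Real.pi = Real.pi by ring, restrict_Ioc_eq_restrict_Icc]

lemma circleLift_mul (v u : ℝ → ℝ) :
    circleLift (fun ω => v ω * u ω) = circleLift v * circleLift u := by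
  ext t
  exact Complex.ofReal_mul _ _

lemma fourierCoeff_circleLift (v : ℝ → ℝ) : fourierCoeff (circleLift v) = fCoef v := by
  ext j
  rw [fCoef, fourierCoeff_eq_intervalIntegral _ j (-Real.pi),
    intervalIntegral.integral_of_le (by linarith [Real.pi_pos]), Complex.real_smul, one_div,
    ← restrict_Ioc_neg_pi_add_two_pi]
  have hchar (ω : ℝ) : fourier (-j) (ω : AddCircle (2 * Real.pi)) =
      Complex.exp (-(Complex.I * ω * j)) := by
    rw [fourier_coe_apply]
    congr 1
    push_cast
    field_simp
  congr 1
  refine setIntegral_congr_fun measurableSet_Ioc fun ω hω => ?_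
  simp only [circleLift, liftIoc_coe_apply hω, hchar, smul_eq_mul, mul_comm]

lemma toep_eq_toeplitzMatrix (n : ℕ) (v : ℝ → ℝ) :
    Toep n v = toeplitzMatrix n (fCoef v) :=
  rfl

lemma memLp_circleLift {v : ℝ → ℝ} {p : ℝ≥0∞}
    (hv : MemLp v p (volume.restrict (Set.Icc (-Real.pi) Real.pi))) :
    MemLp (circleLift v) p haarAddCircle := by
  rw [← restrict_Ioc_neg_pi_add_two_pi] at hv
  exact hv.ofReal.memLp_liftIoc.haarAddCircle

lemma ae_norm_circleLift_le {v : ℝ → ℝ} {M : ℝ}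
    (hv : ∀ᵐ ω ∂volume.restrict (Set.Icc (-Real.pi) Real.pi), |v ω| ≤ M) :
    ∀ᵐ t ∂haarAddCircle, ‖circleLift v t‖ ≤ M := by
  rw [← restrict_Ioc_neg_pi_add_two_pi] at hv
  refine ae_haarAddCircle_liftIoc (p := fun z => ‖z‖ ≤ M) ?_
  simpa only [Complex.norm_real, Real.norm_eq_abs] using hv

lemma sum_sq_norm_toep_mul_sub_le (n : ℕ) {v u : ℝ → ℝ} {M : ℝ}
    (hv : AEStronglyMeasurable v (volume.restrict (Set.Icc (-Real.pi) Real.pi)))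
    (hM : ∀ᵐ ω ∂volume.restrict (Set.Icc (-Real.pi) Real.pi), |v ω| ≤ M)
    (hu : MemLp u 2 (volume.restrict (Set.Icc (-Real.pi) Real.pi)))
    (hs : Summable fun j : ℤ => |(j : ℝ)| * ‖fCoef u j‖ ^ 2) :
    (∑ j : Fin n, ∑ k : Fin n,
        ‖(Toep n (fun ω => v ω * u ω) - Toep n v * Toep n u) j k‖ ^ 2) ≤
      M ^ 2 * ∑' j : ℤ, |(j : ℝ)| * ‖fCoef u j‖ ^ 2 := by
  simp only [toep_eq_toeplitzMatrix, ← fourierCoeff_circleLift, circleLift_mul] at hs ⊢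
  exact stmt17_general n (memLp_circleLift (memLp_zero_iff_aestronglyMeasurable.2 hv)).1
    (ae_norm_circleLift_le hM) (memLp_circleLift hu) hs

/-- Lemma, part (iv): `‖T_n(vu) − T_n(v)T_n(u)‖_F² ≤ 4M₁²M₂`. -/
theorem stmt17 (n : ℕ) (hn : 1 ≤ n) (v u : ℝ → ℝ) (M₁ M₂ : ℝ)
    (hv1 : IntegrableOn v (Set.Icc (-Real.pi) Real.pi))
    (hv2 : IntegrableOn (fun ω => (v ω) ^ 2) (Set.Icc (-Real.pi) Real.pi))
    (hu1 : IntegrableOn u (Set.Icc (-Real.pi) Real.pi))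
    (hu2 : IntegrableOn (fun ω => (u ω) ^ 2) (Set.Icc (-Real.pi) Real.pi))
    (hM1 : ∀ᵐ ω ∂(volume.restrict (Set.Icc (-Real.pi) Real.pi)), |v ω| ≤ M₁)
    (hsum : Summable fun j : ℤ => |(j : ℝ)| * ‖fCoef u j‖ ^ 2)
    (hM2 : (∑' j : ℤ, |(j : ℝ)| * ‖fCoef u j‖ ^ 2) ≤ M₂) :
    (∑ j : Fin n, ∑ k : Fin n,
        ‖(Toep n (fun ω => v ω * u ω) - Toep n v * Toep n u) j k‖ ^ 2) ≤
      4 * M₁ ^ 2 * M₂ := by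
  have hu := (memLp_two_iff_integrable_sq hu1.aestronglyMeasurable).2 hu2
  have hM₂ : 0 ≤ M₂ := (tsum_nonneg fun j => by positivity).trans hM2
  calc _ ≤ M₁ ^ 2 * ∑' j : ℤ, |(j : ℝ)| * ‖fCoef u j‖ ^ 2 :=
        sum_sq_norm_toep_mul_sub_le n hv1.aestronglyMeasurable hM1 hu hsum
    _ ≤ M₁ ^ 2 * M₂ := by gcongr
    _ ≤ 4 * M₁ ^ 2 * M₂ := by linarith [mul_nonneg (sq_nonneg M₁) hM₂]
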